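/- For integers l ≥ 2 and d ≥ 1, let A be the (2l+1) × (2l+1) real symmetric matrix with rows and columns indexed by v₁,…,v_l, u₁,…,u_l, u₀, whose entries are: A_{v_i v_j} = 2d for i ≠ j, A_{v_i u_j} = A_{u_j v_i} = d+1 for i ≠ j, A_{v_i u_i} = A_{u_i v_i} = 0, A_{v_i u₀} = A_{u₀ v_i} = d, and all remaining entries (the v_iv_i diagonal, all entries among u₀, u₁, …, u_l) equal to 0. Then the sum E_{2l−1}(A) of all (2l−1) × (2l−1) principal minors of A is non-zero. -/

import Mathlib

open SimpleGraph Finset Matrix Polynomial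

/-- The `(2l+1) × (2l+1)` matrix `A` indexed by `v₁, …, v_l` (the `Sum.inl` indices),
`u₁, …, u_l` (the `Sum.inr ∘ Sum.inl` indices) and `u₀` (the `Sum.inr (Sum.inr ())` index). -/
def matA (l d : ℕ) : Matrix (Fin l ⊕ Fin l ⊕ Unit) (Fin l ⊕ Fin l ⊕ Unit) ℝ :=
  Matrix.of fun x y =>
    match x, y with
    | Sum.inl i, Sum.inl j => if i = j then 0 else 2*d
    | Sum.inl i, Sum.inr (Sum.inl j) => if i = j then 0 else d+1
    | Sum.inr (Sum.inl i), Sum.inl j => if i = j then 0 else d+1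
    | Sum.inl _, Sum.inr (Sum.inr _) => d
    | Sum.inr (Sum.inr _), Sum.inl _ => d
    | _, _ => 0

/-- `sumPrincMinors M k` is `E_k(M)`, the sum of all `k × k` principal minors of `M`. -/
noncomputable def sumPrincMinors {m : Type*} [Fintype m] [DecidableEq m]
    (M : Matrix m m ℝ) (k : ℕ) : ℝ :=
  ∑ S ∈ Finset.univ.powersetCard k,
    (M.submatrix (fun x : {x : m // x ∈ S} => x.1) (fun x : {x : m // x ∈ S} => x.1)).det

/-!
Eliminating the `u`-vertices from `x - A` leaves a quadratic matrix polynomial in `x` of the form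
`q(x) I + β(x) J`, where `J` is the all-ones matrix, so the characteristic polynomial of `A`
factors as `X q^(l-1) r` with `q` and `r` quadratic. Up to sign, `E_{2l-1}(A)` is its coefficient
of `X^2`, that is, the linear coefficient of `q^(l-1) r`, and this has a closed form all of whose
factors are nonzero.
-/

theorem polynomial_coeff_one_pow {R : Type*} [CommSemiring R] (p : R[X]) (k : ℕ) :
    (p ^ k).coeff 1 = k * p.coeff 1 * p.coeff 0 ^ (k - 1) := by
  simpa only [← Polynomial.coe_pow, coeff_coe, constantCoeff_coe] using
    PowerSeries.coeff_one_pow k (p : PowerSeries R)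

section Block

variable {R : Type*} [CommRing R] {m n : Type*} [Fintype m] [DecidableEq m] [Fintype n]
  [DecidableEq n]

theorem det_smul_one_sub_vecMulVec [Nonempty n] (x : R) (u v : n → R) :
    (x • (1 : Matrix n n R) - vecMulVec u v).det =
      x ^ (Fintype.card n - 1) * (x - u ⬝ᵥ v) := by
  rw [smul_one_eq_diagonal, ← scalar_apply, ← eval_charpoly, charpoly_vecMulVec]
  simp only [eval_sub, eval_smul, eval_pow, eval_X, smul_eq_mul, mul_sub]
  rw [pow_sub_one_mul Fintype.card_ne_zero, mul_comm (u ⬝ᵥ v)]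

theorem det_fromBlocks_smul_one₂₂_mul_pow (A : Matrix m m R) (B : Matrix m n R)
    (C : Matrix n m R) (x : R) :
    (fromBlocks A B C (x • 1)).det * x ^ Fintype.card m =
      (x • A - B * C).det * x ^ Fintype.card n := by
  have hmul : fromBlocks A B C (x • 1) * fromBlocks (x • 1) 0 (-C) 1 =
      fromBlocks (x • A - B * C) B 0 (x • 1) := by
    simp [fromBlocks_multiply, sub_eq_add_neg]
  simpa [det_fromBlocks_zero₁₂, det_fromBlocks_zero₂₁, det_smul] using congrArg det hmul

theorem charpoly_fromBlocks_zero₂₂_mul_X_pow (A : Matrix m m R) (B : Matrix m n R)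
    (C : Matrix n m R) :
    (fromBlocks A B C 0).charpoly * X ^ Fintype.card m =
      ((X : R[X]) • A.charmatrix - (B * C).map Polynomial.C).det * X ^ Fintype.card n := by
  have hzero : charmatrix (0 : Matrix n n R) = (X : R[X]) • 1 := by
    simp [charmatrix, smul_one_eq_diagonal]
  rw [charpoly, charmatrix_fromBlocks, hzero, det_fromBlocks_smul_one₂₂_mul_pow,
    Matrix.neg_mul, Matrix.mul_neg, neg_neg, Matrix.map_mul]

end Block

section CliqueCrown

variable {R : Type*} [CommRing R] {n : Type*} [Fintype n] [DecidableEq n]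

/-- The weighted biadjacency matrix joining `v_i` to `u_j` with weight `b` for `i ≠ j` (a crown
graph) and each `v_i` to `u₀`, encoded as the index `Sum.inr ()`, with weight `c`. -/
def crownBlock (n : Type*) [DecidableEq n] (b c : R) : Matrix n (n ⊕ Unit) R :=
  fromCols (b • (vecMulVec 1 1 - 1)) (replicateCol Unit fun _ => c)

/-- The weighted adjacency matrix of the graph in which the `v_i` form a clique with edge weight
`a` and are joined to the independent set of the `u_i` and `u₀` by `crownBlock n b c`. The matrix
`matA l d` is the case `a = 2d`, `b = d + 1`, `c = d`. -/
def cliqueCrownMatrix (n : Type*) [DecidableEq n] (a b c : R) :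
    Matrix (n ⊕ n ⊕ Unit) (n ⊕ n ⊕ Unit) R :=
  fromBlocks (a • (vecMulVec 1 1 - 1)) (crownBlock n b c) (crownBlock n b c)ᵀ 0

theorem matA_eq_cliqueCrownMatrix (l d : ℕ) :
    matA l d = cliqueCrownMatrix (Fin l) (2 * d : ℝ) (d + 1) d := by
  ext (i | i | i) (j | j | _) <;>
    simp only [matA, cliqueCrownMatrix, crownBlock, of_apply, fromBlocks_apply₁₁,
      fromBlocks_apply₁₂, fromBlocks_apply₂₁, fromBlocks_apply₂₂, fromCols_apply_inl,
      fromCols_apply_inr, transpose_apply, replicateCol_apply, Matrix.smul_apply,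
      Matrix.sub_apply, Matrix.zero_apply, vecMulVec_apply, Pi.one_apply, one_apply, smul_eq_mul,
      eq_comm] <;>
    split_ifs <;> simp

theorem vecMulVec_one_one_sub_one_mul_self :
    (vecMulVec 1 1 - 1 : Matrix n n R) * (vecMulVec 1 1 - 1) =
      1 + ((Fintype.card n : R) - 2) • vecMulVec 1 1 := by
  rw [sub_mul, mul_sub, vecMulVec_mul_vecMulVec, one_dotProduct_one, vecMulVec_smul]
  simp only [mul_one, one_mul]
  module

theorem crownBlock_mul_transpose (b c : R) :
    crownBlock n b c * (crownBlock n b c)ᵀ =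
      b ^ 2 • 1 + (b ^ 2 * (Fintype.card n - 2) + c ^ 2) • vecMulVec 1 1 := by
  have hcol : replicateCol Unit (fun _ : n => c) * (replicateCol Unit fun _ : n => c)ᵀ =
      c ^ 2 • vecMulVec 1 1 := by
    ext i j
    simp [mul_apply, sq]
  rw [crownBlock, transpose_fromCols, fromCols_mul_fromRows, hcol, transpose_smul, transpose_sub,
    transpose_vecMulVec, transpose_one, smul_mul_smul_comm,
    vecMulVec_one_one_sub_one_mul_self]
  module

theorem charpoly_cliqueCrownMatrix [Nonempty n] (a b c : R) :
    (cliqueCrownMatrix n a b c).charpoly =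
      X * ((X ^ 2 + C a * X - C (b ^ 2)) ^ (Fintype.card n - 1) *
        (X ^ 2 - C (a * (Fintype.card n - 1)) * X -
          C (b ^ 2 * (Fintype.card n - 1) ^ 2 + c ^ 2 * Fintype.card n))) := by
  have hschur : (X : R[X]) • (a • (vecMulVec 1 1 - 1) : Matrix n n R).charmatrix -
      (crownBlock n b c * (crownBlock n b c)ᵀ).map C =
      (X ^ 2 + C a * X - C (b ^ 2)) • 1 -
        vecMulVec (fun _ => C a * X + C (b ^ 2 * (Fintype.card n - 2) + c ^ 2)) 1 := by
    rw [crownBlock_mul_transpose]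
    ext1 i j
    obtain rfl | hij := eq_or_ne i j
    · simp only [vecMulVec_apply, Pi.one_apply, Matrix.sub_apply, Matrix.add_apply,
        Matrix.smul_apply, map_apply, charmatrix_apply_eq, one_apply_eq, smul_eq_mul, map_add,
        map_sub, map_mul, map_pow, map_natCast, map_ofNat, map_one]
      ring
    · simp only [vecMulVec_apply, Pi.one_apply, Matrix.sub_apply, Matrix.add_apply,
        Matrix.smul_apply, map_apply, charmatrix_apply_ne _ _ _ hij, one_apply_ne hij,
        smul_eq_mul, map_add, map_sub, map_mul, map_pow, map_natCast, map_ofNat, map_zero, map_one]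
      ring
  apply (monic_X_pow (Fintype.card n)).isRegular.right
  change _ * X ^ Fintype.card n = _ * X ^ Fintype.card n
  rw [cliqueCrownMatrix, charpoly_fromBlocks_zero₂₂_mul_X_pow, hschur, det_smul_one_sub_vecMulVec,
    Fintype.card_sum, Fintype.card_unit, dotProduct_one]
  simp only [Finset.sum_const, Finset.card_univ, nsmul_eq_mul, map_add, map_sub, map_mul, map_pow,
    map_natCast, map_ofNat, map_one]
  ring

theorem charpoly_cliqueCrownMatrix_coeff_two [Nontrivial n] (a b c : R) :
    (cliqueCrownMatrix n a b c).charpoly.coeff 2 =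
      -(a * Fintype.card n * (Fintype.card n - 1) * (-b ^ 2) ^ (Fintype.card n - 2) *
        (b ^ 2 * (Fintype.card n - 2) + c ^ 2)) := by
  obtain ⟨k, hk : _ = k + 2⟩ := Nat.exists_eq_add_of_le' (Fintype.one_lt_card (α := n))
  have hpow_zero (p : R[X]) (j : ℕ) : (p ^ j).coeff 0 = p.coeff 0 ^ j :=
    map_pow constantCoeff p j
  have hq_zero (s t : R) : (X ^ 2 + C s * X - C t).coeff 0 = -t := by simp
  have hq_one (s t : R) : (X ^ 2 + C s * X - C t).coeff 1 = s := by
    simp [coeff_X_pow, coeff_C_succ]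
  have hr_zero (s t : R) : (X ^ 2 - C s * X - C t).coeff 0 = -t := by simp
  have hr_one (s t : R) : (X ^ 2 - C s * X - C t).coeff 1 = -s := by
    simp [coeff_X_pow, coeff_C_succ]
  rw [charpoly_cliqueCrownMatrix, coeff_X_mul, mul_coeff_one, polynomial_coeff_one_pow,
    hpow_zero, hq_zero, hq_one, hr_zero, hr_one, hk]
  push_cast
  ring

end CliqueCrown

theorem charpoly_coeff_eq_sumPrincMinors {m : Type*} [Fintype m] [DecidableEq m]
    (M : Matrix m m ℝ) {k : ℕ} (hk : k ≤ Fintype.card m) :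
    M.charpoly.coeff (Fintype.card m - k) = (-1) ^ k * sumPrincMinors M k :=
  charpoly_coeff_eq_sum_minors M k hk

theorem sumPrincMinors_matA {l : ℕ} (hl : 2 ≤ l) (d : ℕ) :
    sumPrincMinors (matA l d) (2 * l - 1) =
      2 * d * l * (l - 1) * (-(d + 1) ^ 2) ^ (l - 2) * ((d + 1) ^ 2 * (l - 2) + d ^ 2) := by
  have : Nontrivial (Fin l) := Fin.nontrivial_iff_two_le.mpr hl
  have hcard : Fintype.card (Fin l ⊕ Fin l ⊕ Unit) = 2 * l + 1 := by
    simp only [Fintype.card_sum, Fintype.card_fin, Fintype.card_unit]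
    ring
  have hcoeff := charpoly_coeff_eq_sumPrincMinors (matA l d) (k := 2 * l - 1) (by lia)
  have hodd : Odd (2 * l - 1) := ⟨l - 1, by lia⟩
  rw [hcard, show 2 * l + 1 - (2 * l - 1) = 2 by lia, hodd.neg_one_pow, neg_one_mul,
    matA_eq_cliqueCrownMatrix, charpoly_cliqueCrownMatrix_coeff_two, Fintype.card_fin,
    ← matA_eq_cliqueCrownMatrix] at hcoeff
  exact (neg_injective hcoeff).symm

/-- For `l ≥ 2` and `d ≥ 1`, the sum of all `(2l-1) × (2l-1)` principal minors of the matrix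
`A` is non-zero. -/
theorem stmt9 (l d : ℕ) (hl : 2 ≤ l) (hd : 1 ≤ d) :
    sumPrincMinors (matA l d) (2*l - 1) ≠ 0 := by
  have hl' : (2 : ℝ) ≤ l := by exact_mod_cast hl
  have hfactor : (0 : ℝ) < 2 * d * l * (l - 1) :=
    mul_pos (by positivity) (by linarith)
  have hpow : (-((d : ℝ) + 1) ^ 2) ^ (l - 2) ≠ 0 :=
    pow_ne_zero _ (neg_ne_zero.mpr (by positivity))
  have hlast : (0 : ℝ) < (d + 1) ^ 2 * (l - 2) + d ^ 2 :=
    add_pos_of_nonneg_of_pos (mul_nonneg (by positivity) (by linarith)) (by positivity)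
  rw [sumPrincMinors_matA hl]
  exact mul_ne_zero (mul_ne_zero hfactor.ne' hpow) hlast.ne'
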